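/- Let σ ∈ S_k and τ ∈ S_n with σ ≤ τ, and let ⟨σ⟩ be an occurrence of σ in τ. The occurrence poset [⟨σ⟩, τ] is a boolean algebra if and only if the pair (⟨σ⟩, τ) is separated. -/

import Mathlib

/-- `f` gives an occurrence of the pattern `σ` in `τ`: the positions `f 0 < f 1 < ⋯`
carry letters of `τ` in the same relative order as `σ`. -/
def IsOccurrence {k n : ℕ} (σ : Equiv.Perm (Fin k)) (τ : Equiv.Perm (Fin n))
    (f : Fin k → Fin n) : Prop :=
  StrictMono f ∧ ∀ i j : Fin k, σ i < σ j ↔ τ (f i) < τ (f j)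

/-- Two sets of kept positions `S, S'` (each containing the marked positions `A`)
determine the same element of the occurrence poset: the words of `τ` read along `S`
and along `S'` are order isomorphic, with the marked positions corresponding. -/
def OccEquiv {n : ℕ} (τ : Equiv.Perm (Fin n)) (A S S' : Finset (Fin n)) : Prop :=
  ∃ g : {x // x ∈ S} ≃o {x // x ∈ S'},
    (∀ a b : {x // x ∈ S}, τ a.1 < τ b.1 ↔ τ (g a).1 < τ (g b).1) ∧
    (∀ a : {x // x ∈ S}, a.1 ∈ A ↔ (g a).1 ∈ A)

/-- Representatives of elements of the occurrence poset with marked positions `A`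
and ground set `U`: sets of kept positions between `A` and `U`. -/
def OccCarrier {n : ℕ} (A U : Finset (Fin n)) := {S : Finset (Fin n) // A ⊆ S ∧ S ⊆ U}

/-- The occurrence poset `[⟨σ⟩, τ]` (with ground set `U`): kept-position sets modulo
order isomorphism respecting the marked occurrence. -/
def OccPoset {n : ℕ} (τ : Equiv.Perm (Fin n)) (A U : Finset (Fin n)) :=
  Quot (fun S S' : OccCarrier A U => OccEquiv τ A S.1 S'.1)

def occMk {n : ℕ} (τ : Equiv.Perm (Fin n)) (A U : Finset (Fin n)) (S : OccCarrier A U) :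
    OccPoset τ A U :=
  Quot.mk _ S

/-- The partial order of the occurrence poset: deletion of unmarked letters. -/
def occLE {n : ℕ} (τ : Equiv.Perm (Fin n)) (A U : Finset (Fin n))
    (q q' : OccPoset τ A U) : Prop :=
  ∃ S S' : OccCarrier A U, q = occMk τ A U S ∧ q' = occMk τ A U S' ∧ S.1 ⊆ S'.1

/-- The bottom element `⟨σ⟩` of the occurrence poset. -/
def occBot {n : ℕ} (τ : Equiv.Perm (Fin n)) (A U : Finset (Fin n)) (h : A ⊆ U) :
    OccPoset τ A U :=
  occMk τ A U ⟨A, subset_rfl, h⟩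

/-- The top element `τ` of the occurrence poset. -/
def occTop {n : ℕ} (τ : Equiv.Perm (Fin n)) (A U : Finset (Fin n)) (h : A ⊆ U) :
    OccPoset τ A U :=
  occMk τ A U ⟨U, h, subset_rfl⟩

/-- `J` is an interval block of the pattern of `τ` restricted to the kept positions `S`:
`J` consists of at least two kept positions, consecutive among `S` both in position and
in value. -/
def IsBlockIn {n : ℕ} (τ : Equiv.Perm (Fin n)) (S J : Finset (Fin n)) : Prop :=
  J ⊆ S ∧ 2 ≤ J.card ∧
    (∀ x ∈ J, ∀ y ∈ J, ∀ z ∈ S, x ≤ z → z ≤ y → z ∈ J) ∧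
    (∀ x ∈ J, ∀ y ∈ J, ∀ z ∈ S, τ x ≤ τ z → τ z ≤ τ y → z ∈ J)

/-- The pair (marked occurrence `A`, permutation given by kept positions `S`) has an
interval block: an interval block disjoint from the occurrence. -/
def PairHasBlock {n : ℕ} (τ : Equiv.Perm (Fin n)) (A S : Finset (Fin n)) : Prop :=
  ∃ J : Finset (Fin n), IsBlockIn τ S J ∧ ∀ p ∈ J, p ∉ A

/-- An element of the occurrence poset is interval free if (a representative of) it has
no interval block disjoint from the marked occurrence. -/
def occIntervalFree {n : ℕ} (τ : Equiv.Perm (Fin n)) (A U : Finset (Fin n))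
    (q : OccPoset τ A U) : Prop :=
  ∃ S : OccCarrier A U, q = occMk τ A U S ∧ ¬ PairHasBlock τ A S.1

theorem OccEquiv.card_eq {n : ℕ} {τ : Equiv.Perm (Fin n)} {A S S' : Finset (Fin n)}
    (h : OccEquiv τ A S S') : S.card = S'.card := by
  obtain ⟨g, -, -⟩ := h
  simpa using Fintype.card_congr g.toEquiv

/-- The rank of an element of the occurrence poset: its number of letters minus `k`. -/
def occRank {n : ℕ} (τ : Equiv.Perm (Fin n)) (A U : Finset (Fin n)) (k : ℕ) :
    OccPoset τ A U → ℕ :=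
  Quot.lift (fun S => S.1.card - k) (fun S S' h => by
    have hc := OccEquiv.card_eq h
    show S.1.card - k = S'.1.card - k
    omega)

/-- Positions `p` and `q` lie in the same region: no position between them (inclusive)
is a marked position. -/
def SameRegion {n : ℕ} (A : Finset (Fin n)) (p q : Fin n) : Prop :=
  ∀ z : Fin n, min p q ≤ z → z ≤ max p q → z ∉ A

/-- The pair (occurrence with marked positions `A`, `τ`) is separated: any two letters in
the same region are separated in value by a letter of the occurrence. -/
def Separated {n : ℕ} (τ : Equiv.Perm (Fin n)) (A : Finset (Fin n)) : Prop :=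
  ∀ p q : Fin n, SameRegion A p q → τ p < τ q → ∃ a ∈ A, τ p < τ a ∧ τ a < τ q

/-- The letters at positions `p, q` (with `τ p < τ q`) are similar: same region, and no
letter of the occurrence lies strictly between them in value. -/
def SimilarPos {n : ℕ} (τ : Equiv.Perm (Fin n)) (A : Finset (Fin n)) (p q : Fin n) : Prop :=
  SameRegion A p q ∧ τ p < τ q ∧ ∀ a ∈ A, ¬ (τ p < τ a ∧ τ a < τ q)

/-- A group of similar letters: at least two letters, pairwise similar. -/
def IsSimilarGroup {n : ℕ} (τ : Equiv.Perm (Fin n)) (A : Finset (Fin n))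
    (G : Finset (Fin n)) : Prop :=
  2 ≤ G.card ∧ ∀ p ∈ G, ∀ q ∈ G, τ p < τ q → SimilarPos τ A p q

/-- A maximal group of similar letters: one contained in no strictly larger group. -/
def IsMaxSimilarGroup {n : ℕ} (τ : Equiv.Perm (Fin n)) (A : Finset (Fin n))
    (G : Finset (Fin n)) : Prop :=
  IsSimilarGroup τ A G ∧ ∀ G' : Finset (Fin n), IsSimilarGroup τ A G' → G ⊆ G' → G' = G

/-- The occurrence poset is a boolean algebra: isomorphic to the poset of all subsets of
a finite set, ordered by inclusion. -/
def IsBooleanOccPoset {n : ℕ} (τ : Equiv.Perm (Fin n)) (A U : Finset (Fin n)) : Prop :=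
  ∃ (m : ℕ) (e : OccPoset τ A U ≃ Finset (Fin m)),
    ∀ q q' : OccPoset τ A U, occLE τ A U q q' ↔ e q ⊆ e q'

/-- The pattern poset `P`: permutations of every length, a permutation of length `m` being
an element of `Equiv.Perm (Fin m)` (its standard form). -/
def PatternPoset := Σ m : ℕ, Equiv.Perm (Fin m)

/-- The order of the pattern poset: pattern containment. -/
def patternLE (a b : PatternPoset) : Prop :=
  ∃ f : Fin a.1 → Fin b.1, IsOccurrence a.2 b.2 f

/-- `b` covers `a` in the pattern poset: `a < b` and `b` has one letter more than `a`. -/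
def patternCovers (a b : PatternPoset) : Prop :=
  patternLE a b ∧ a ≠ b ∧ b.1 = a.1 + 1


theorem occ_aux_fix {n : ℕ} {τ : Equiv.Perm (Fin n)} {A S S' : Finset (Fin n)}
    (hS : A ⊆ S) (g : {x // x ∈ S} ≃o {x // x ∈ S'})
    (hg : ∀ a : {x // x ∈ S}, a.1 ∈ A ↔ (g a).1 ∈ A) (hS' : A ⊆ S')
    (a : Fin n) (ha : a ∈ A) : (g ⟨a, hS ha⟩).1 = a := by
  let f1 : {x // x ∈ A} → {x // x ∈ A} := fun a => ⟨(g ⟨a.1, hS a.2⟩).1, (hg _).1 a.2⟩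
  let f2 : {x // x ∈ A} → {x // x ∈ A} := fun a => ⟨(g.symm ⟨a.1, hS' a.2⟩).1, by
    rw [hg]; simp⟩
  have h1 : StrictMono f1 := fun x y h => by
    have : g ⟨x.1, hS x.2⟩ < g ⟨y.1, hS y.2⟩ := g.strictMono h
    exact this
  have h2 : StrictMono f2 := fun x y h => by
    have : g.symm ⟨x.1, hS' x.2⟩ < g.symm ⟨y.1, hS' y.2⟩ := g.symm.strictMono h
    exact this
  have k1 := h1.le_apply (x := ⟨a, ha⟩)
  have k2 := h2.le_apply (x := f1 ⟨a, ha⟩)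
  have k3 : f2 (f1 ⟨a, ha⟩) = ⟨a, ha⟩ := by
    apply Subtype.ext; simp [f1, f2]
  rw [k3] at k2
  exact congrArg Subtype.val (le_antisymm k2 k1)

theorem occ_aux_sub {n : ℕ} {τ : Equiv.Perm (Fin n)} {A S S' : Finset (Fin n)}
    (hsep : Separated τ A) (hS : A ⊆ S) (hS' : A ⊆ S') (h : OccEquiv τ A S S') : S ⊆ S' := by
  obtain ⟨g, hv, hm⟩ := h
  have hfix := fun a ha => occ_aux_fix (τ := τ) hS g hm hS' a ha
  intro x hx
  have key : (g ⟨x, hx⟩).1 = x := by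
    by_cases hxA : x ∈ A
    · exact hfix x hxA
    have hgA : (g ⟨x, hx⟩).1 ∉ A := fun h => hxA ((hm ⟨x, hx⟩).2 h)
    have p1 : ∀ a ∈ A, (a < x ↔ a < (g ⟨x, hx⟩).1) := by
      intro a ha
      have h1 : (⟨a, hS ha⟩ : {x // x ∈ S}) < ⟨x, hx⟩ ↔ g ⟨a, hS ha⟩ < g ⟨x, hx⟩ :=
        g.lt_iff_lt.symm
      have h2 := hfix a ha
      rw [← Subtype.coe_lt_coe, ← Subtype.coe_lt_coe, h2] at h1
      exact h1
    have p2 : ∀ a ∈ A, (τ a < τ x ↔ τ a < τ (g ⟨x, hx⟩).1) := by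
      intro a ha
      have h1 := hv ⟨a, hS ha⟩ ⟨x, hx⟩
      rw [hfix a ha] at h1
      exact h1
    generalize (g ⟨x, hx⟩).1 = y at *
    have hr : ∀ z : Fin n, min x y ≤ z → z ≤ max x y → z ∉ A := by
      intro z h1 h2 hz
      have := p1 z hz
      have hzx : z ≠ x := fun h => hxA (h ▸ hz)
      have hzy : z ≠ y := fun h => hgA (h ▸ hz)
      grind
    rcases lt_trichotomy (τ x) (τ y) with h | h | h
    · obtain ⟨a, ha, h1, h2⟩ := hsep x y hr h
      exact absurd ((p2 a ha).2 h2) (not_lt.2 h1.le)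
    · exact (τ.injective h).symm
    · obtain ⟨a, ha, h1, h2⟩ := hsep y x (by
        intro z h1 h2; rw [min_comm] at h1; rw [max_comm] at h2; exact hr z h1 h2) h
      exact absurd ((p2 a ha).1 h2) (not_lt.2 h1.le)
  rw [← key]; exact (g ⟨x, hx⟩).2

theorem occ_aux_symm {n : ℕ} {τ : Equiv.Perm (Fin n)} {A S S' : Finset (Fin n)}
    (h : OccEquiv τ A S S') : OccEquiv τ A S' S := by
  obtain ⟨g, hv, hm⟩ := h
  refine ⟨g.symm, fun a b => ?_, fun a => ?_⟩
  · rw [hv]; simp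
  · rw [hm]; simp

theorem occ_aux_swap {n : ℕ} {τ : Equiv.Perm (Fin n)} {A : Finset (Fin n)} {p q : Fin n}
    (hr : SameRegion A p q) (hlt : τ p < τ q) (hn : ∀ a ∈ A, ¬ (τ p < τ a ∧ τ a < τ q)) :
    OccEquiv τ A (insert p A) (insert q A) := by
  have hp : p ∉ A := hr p (min_le_left _ _) (le_max_left _ _)
  have hq : q ∉ A := hr q (min_le_right _ _) (le_max_right _ _)
  have p1 : ∀ a ∈ A, (a < p ↔ a < q) ∧ (p < a ↔ q < a) := by
    intro a ha
    have h1 := hr a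
    have hzx : a ≠ p := fun h => hp (h ▸ ha)
    have hzy : a ≠ q := fun h => hq (h ▸ ha)
    grind
  have p2 : ∀ a ∈ A, (τ a < τ p ↔ τ a < τ q) ∧ (τ p < τ a ↔ τ q < τ a) := by
    intro a ha
    have h1 := hn a ha
    have hzx : τ a ≠ τ p := fun h => hp (τ.injective h ▸ ha)
    have hzy : τ a ≠ τ q := fun h => hq (τ.injective h ▸ ha)
    grind
  have hpq : p ≠ q := fun h => by simp [h] at hlt
  let sw : Fin n → Fin n → Fin n → Fin n := fun u v x => if x = u then v else x
  have hsw : ∀ u v x, sw u v x = if x = u then v else x := fun _ _ _ => rfl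
  let e : {x // x ∈ insert p A} ≃ {x // x ∈ insert q A} :=
    { toFun := fun x => ⟨sw p q x.1, by have := x.2; simp only [Finset.mem_insert] at *; grind⟩
      invFun := fun x => ⟨sw q p x.1, by have := x.2; simp only [Finset.mem_insert] at *; grind⟩
      left_inv := fun x => by
        have := x.2; apply Subtype.ext; simp only [Finset.mem_insert] at *; grind
      right_inv := fun x => by
        have := x.2; apply Subtype.ext; simp only [Finset.mem_insert] at *; grind }
  have he : ∀ x, (e x).1 = sw p q x.1 := fun _ => rfl
  refine ⟨⟨e, ?_⟩, ?_, ?_⟩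
  · rintro ⟨a, ha⟩ ⟨b, hb⟩
    rw [← Subtype.coe_le_coe, ← Subtype.coe_le_coe, he, he]
    simp only [Finset.mem_insert] at ha hb
    simp only [hsw]
    rw [← not_lt, ← not_lt, not_iff_not]
    grind
  · rintro ⟨a, ha⟩ ⟨b, hb⟩
    change _ ↔ τ (e _).1 < τ (e _).1
    rw [he, he]
    simp only [Finset.mem_insert] at ha hb
    simp only [hsw]
    grind
  · rintro ⟨a, ha⟩
    change _ ↔ (e _).1 ∈ A
    rw [he]
    simp only [Finset.mem_insert] at ha
    simp only [hsw]
    grind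

theorem occ_aux_boolean {n : ℕ} {τ : Equiv.Perm (Fin n)} {A : Finset (Fin n)}
    (hsep : Separated τ A) : IsBooleanOccPoset τ A Finset.univ := by
  classical
  let L : OccPoset τ A Finset.univ → Finset (Fin n) :=
    Quot.lift (fun S => S.1) (fun S S' h => Finset.Subset.antisymm
      (occ_aux_sub hsep S.2.1 S'.2.1 h) (occ_aux_sub hsep S'.2.1 S.2.1 (occ_aux_symm h)))
  have hL : ∀ S, L (occMk τ A Finset.univ S) = S.1 := fun _ => rfl
  have hLA : ∀ q, A ⊆ L q := fun q => Quot.inductionOn q (fun S => S.2.1)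
  have hLm : ∀ q, occMk τ A Finset.univ ⟨L q, hLA q, Finset.subset_univ _⟩ = q :=
    fun q => Quot.inductionOn q (fun S => rfl)
  have hle : ∀ q q', occLE τ A Finset.univ q q' ↔ L q ⊆ L q' := by
    intro q q'
    constructor
    · rintro ⟨S, S', rfl, rfl, h⟩; exact h
    · intro h; exact ⟨_, _, (hLm q).symm, (hLm q').symm, h⟩
  let w := Fintype.equivFin {x // x ∉ A}
  let G : Finset (Fin (Fintype.card {x // x ∉ A})) → OccPoset τ A Finset.univ := fun T =>
    occMk τ A Finset.univ ⟨A ∪ T.image (fun i => (w.symm i).1), Finset.subset_union_left,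
      Finset.subset_univ _⟩
  let F : OccPoset τ A Finset.univ → Finset (Fin (Fintype.card {x // x ∉ A})) := fun q =>
    Finset.univ.filter (fun i => (w.symm i).1 ∈ L q)
  have hF : ∀ q q', F q ⊆ F q' ↔ L q ⊆ L q' := by
    intro q q'
    constructor
    · intro h x hx
      by_cases hxA : x ∈ A
      · exact hLA q' hxA
      have : w ⟨x, hxA⟩ ∈ F q := by simp [F, hx]
      simpa [F] using h this
    · intro h i hi
      simp only [F, Finset.mem_filter, Finset.mem_univ, true_and] at *
      exact h hi
  have hFG : ∀ T, F (G T) = T := by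
    intro T
    ext i
    have hGL : L (G T) = A ∪ T.image (fun i => (w.symm i).1) := rfl
    simp only [F, Finset.mem_filter, Finset.mem_univ, true_and]
    rw [hGL, Finset.mem_union, Finset.mem_image]
    constructor
    · rintro (h | ⟨j, hj, h⟩)
      · exact absurd h (w.symm i).2
      · rwa [← w.symm.injective (Subtype.ext h)]
    · intro h; exact Or.inr ⟨i, h, rfl⟩
  have hinj : Function.Injective F := by
    intro q q' h
    have : L q = L q' := Finset.Subset.antisymm ((hF q q').1 h.subset) ((hF q' q).1 h.symm.subset)
    rw [← hLm q, ← hLm q']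
    congr 1
    exact Subtype.ext this
  refine ⟨_, ⟨F, G, fun q => hinj (hFG _), hFG⟩, fun q q' => ?_⟩
  rw [hle]; exact (hF q q').symm

theorem occ_aux_sep {n : ℕ} {τ : Equiv.Perm (Fin n)} {A : Finset (Fin n)}
    (hb : IsBooleanOccPoset τ A Finset.univ) : Separated τ A := by
  classical
  obtain ⟨m, e, he⟩ := hb
  by_contra hsep
  unfold Separated at hsep
  push Not at hsep
  obtain ⟨p, q, hr, hlt, hn⟩ := hsep
  have hn' : ∀ a ∈ A, ¬ (τ p < τ a ∧ τ a < τ q) := fun a ha h => absurd h.2 (not_lt.2 (hn a ha h.1))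
  have hp : p ∉ A := hr p (min_le_left _ _) (le_max_left _ _)
  have hpq : p ≠ q := fun h => by simp [h] at hlt
  let M : Finset {x // x ∉ A} → OccPoset τ A Finset.univ := fun T =>
    occMk τ A Finset.univ ⟨A ∪ T.image Subtype.val, Finset.subset_union_left,
      Finset.subset_univ _⟩
  have hq : q ∉ A := hr q (min_le_right _ _) (le_max_right _ _)
  have hMs : Function.Surjective M := by
    intro x
    induction x using Quot.inductionOn with
    | _ S =>
    refine ⟨Finset.univ.filter (fun i => i.1 ∈ S.1), ?_⟩
    have : A ∪ (Finset.univ.filter (fun i : {x // x ∉ A} => i.1 ∈ S.1)).image Subtype.val = S.1 := by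
      ext x
      have : x ∈ A → x ∈ S.1 := fun h => S.2.1 h
      simp only [Finset.mem_union, Finset.mem_image, Finset.mem_filter, Finset.mem_univ, true_and,
        Subtype.exists, exists_and_left, exists_prop, exists_eq_right_right]
      tauto
    change occMk τ A Finset.univ _ = occMk τ A Finset.univ S
    congr 1
    exact Subtype.ext this
  have hMe : M {⟨p, hp⟩} = M {⟨q, hq⟩} := by
    apply Quot.sound
    have := occ_aux_swap hr hlt hn'
    have hu : ∀ (r : Fin n) (h : r ∉ A),
        A ∪ ({⟨r, h⟩} : Finset {x // x ∉ A}).image Subtype.val = insert r A := by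
      intro r h
      rw [Finset.image_singleton, Finset.union_comm, Finset.insert_eq]
    change OccEquiv τ A (A ∪ _) (A ∪ _)
    rw [hu p hp, hu q hq]
    exact this
  have hrank : ∀ T, occRank τ A Finset.univ A.card (M T) = T.card := by
    intro T
    change (A ∪ T.image Subtype.val).card - A.card = T.card
    rw [Finset.card_union_of_disjoint, Finset.card_image_of_injective _ Subtype.val_injective]
    · omega
    · rw [Finset.disjoint_left]
      intro a ha h
      obtain ⟨b, -, rfl⟩ := Finset.mem_image.1 h
      exact b.2 ha
  have hcard : ∀ T, T.card ≤ (e (M T)).card := by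
    intro T
    induction T using Finset.induction_on with
    | empty => simp
    | insert x T hx ih =>
      have h1 : e (M T) ⊆ e (M (insert x T)) := by
        rw [← he]
        refine ⟨_, _, rfl, rfl, ?_⟩
        exact Finset.union_subset_union_right (Finset.image_subset_image (Finset.subset_insert _ _))
      have h2 : e (M T) ≠ e (M (insert x T)) := by
        intro h
        have := congrArg (occRank τ A Finset.univ A.card) (e.injective h)
        rw [hrank, hrank, Finset.card_insert_of_notMem hx] at this
        omega
      have h3 := Finset.card_lt_card (lt_of_le_of_ne h1 h2)
      rw [Finset.card_insert_of_notMem hx]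
      omega
  have h1 : Fintype.card {x // x ∉ A} ≤ m := by
    have := (hcard Finset.univ).trans (Finset.card_le_univ _)
    simpa only [Finset.card_univ, Fintype.card_fin] using this
  have hs : Function.Surjective (e ∘ M) := e.surjective.comp hMs
  have h2 : Fintype.card (Finset {x // x ∉ A}) ≤ Fintype.card (Finset (Fin m)) := by
    rw [Fintype.card_finset, Fintype.card_finset, Fintype.card_fin]
    exact Nat.pow_le_pow_right (by norm_num) h1
  have hbij := (Fintype.bijective_iff_surjective_and_card (e ∘ M)).2
    ⟨hs, le_antisymm h2 (Fintype.card_le_of_surjective _ hs)⟩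
  have h3 := hbij.1 (congrArg e hMe)
  rw [Finset.singleton_inj] at h3
  exact hpq (congrArg Subtype.val h3)

/-- the occurrence poset `[⟨σ⟩, τ]` is a boolean algebra if and only if the
pair `(⟨σ⟩, τ)` is separated. -/
theorem occurrence_poset_boolean_iff_separated {k n : ℕ}
    (σ : Equiv.Perm (Fin k)) (τ : Equiv.Perm (Fin n))
    (f : Fin k → Fin n) (hf : IsOccurrence σ τ f)
    (A : Finset (Fin n)) (hA : A = Finset.image f Finset.univ) :
    IsBooleanOccPoset τ A Finset.univ ↔ Separated τ A :=
  ⟨occ_aux_sep, occ_aux_boolean⟩
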